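/- arXiv:1406.6004 — 4 statements merged into one kernel-verified Lean document; each statement's English description precedes it below -/
import Mathlib

section
/- Let f, g ∈ ℤ[X] be monic polynomials of degree 2 and let φ : ℤ[X]⧸(f) → ℤ[X]⧸(g) be a ring isomorphism. Then there exist ε ∈ {1, −1} and r ∈ ℤ such that φ sends the class of X in ℤ[X]⧸(f) to the class of εX + r in ℤ[X]⧸(g). -/
open Polynomial

theorem quot_repr_aux (g : ℤ[X]) (hg : g.Monic) (hgd : g.natDegree = 2)
    (y : ℤ[X] ⧸ Ideal.span {g}) :
    ∃ a b : ℤ, y = Ideal.Quotient.mk (Ideal.span {g}) (C a * X + C b) := by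
  obtain ⟨p, rfl⟩ := Ideal.Quotient.mk_surjective y
  have hlt : (p %ₘ g).natDegree < 2 := by
    have := natDegree_modByMonic_lt p hg (by rintro rfl; simp at hgd)
    omega
  obtain ⟨a, b, h⟩ := exists_eq_X_add_C_of_natDegree_le_one (p := p %ₘ g) (by omega)
  refine ⟨a, b, ?_⟩
  rw [← h, Ideal.Quotient.eq, Ideal.mem_span_singleton]
  exact ⟨p /ₘ g, by linear_combination -(modByMonic_add_div p g)⟩

theorem quot_map_aux (f g : ℤ[X])
    (φ : (ℤ[X] ⧸ Ideal.span {f}) ≃+* (ℤ[X] ⧸ Ideal.span {g})) (c : ℤ) :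
    φ (Ideal.Quotient.mk (Ideal.span {f}) (C c)) = Ideal.Quotient.mk (Ideal.span {g}) (C c) := by
  have h1 : (C c : ℤ[X]) = (c : ℤ[X]) := by simp
  rw [h1, map_intCast, map_intCast, map_intCast]

/-- Any ring isomorphism `ℤ[X]⧸(f) → ℤ[X]⧸(g)` between quotients of
`ℤ[X]` by monic quadratic polynomials sends the class of `X` to the class of
`εX + r` for some `ε ∈ {1, −1}` and `r ∈ ℤ`. -/
theorem iso_of_monic_quadratic_quotients_sends_X_to_affine
    (f g : ℤ[X]) (hf : f.Monic) (hg : g.Monic)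
    (hfd : f.natDegree = 2) (hgd : g.natDegree = 2)
    (φ : (ℤ[X] ⧸ Ideal.span {f}) ≃+* (ℤ[X] ⧸ Ideal.span {g})) :
    ∃ ε r : ℤ, (ε = 1 ∨ ε = -1) ∧
      φ (Ideal.Quotient.mk (Ideal.span {f}) X) =
        Ideal.Quotient.mk (Ideal.span {g}) (C ε * X + C r) := by
  obtain ⟨a, b, h1⟩ := quot_repr_aux g hg hgd (φ (Ideal.Quotient.mk (Ideal.span {f}) X))
  obtain ⟨c, d, h2⟩ := quot_repr_aux f hf hfd (φ.symm (Ideal.Quotient.mk (Ideal.span {g}) X))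
  have h3 := congrArg φ h2
  rw [RingEquiv.apply_symm_apply, map_add, map_mul, map_add, map_mul, quot_map_aux,
    quot_map_aux, h1, ← map_mul, ← map_add, Ideal.Quotient.eq, Ideal.mem_span_singleton] at h3
  have h4 : (X - (C c * (C a * X + C b) + C d) : ℤ[X]) = C (1 - c * a) * X + C (-(c * b + d)) := by
    simp only [map_sub, map_neg, map_add, map_mul, map_one]; ring
  rw [h4] at h3
  have h5 := eq_zero_of_dvd_of_natDegree_lt h3
    (lt_of_le_of_lt natDegree_linear_le (by omega))
  have h6 := congrArg (fun p => coeff p 1) h5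
  have h7 : c * a = 1 := by
    simp only [coeff_add, coeff_C_mul, coeff_X_one, coeff_C_succ, coeff_zero] at h6
    linarith
  exact ⟨a, b, Int.isUnit_iff.mp (IsUnit.of_mul_eq_one_right c h7), h1⟩
end

section
/- Let f = X² + bX + c and g = X² + b'X + c' be monic quadratic polynomials in ℤ[X]. Then the rings ℤ[X]⧸(f) and ℤ[X]⧸(g) are isomorphic if and only if b² − 4c = b'² − 4c', i.e., if and only if f and g have the same discriminant. -/
open Polynomial

open QuadraticAlgebra in
/-- The quotient as a quadratic algebra. -/
noncomputable def quotEquivQA (b c : ℤ) :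
    (AdjoinRoot (X ^ 2 + C b * X + C c : ℤ[X])) ≃ₐ[ℤ] QuadraticAlgebra ℤ (-c) (-b) :=
  AlgEquiv.ofAlgHom
    (AdjoinRoot.liftAlgHom _ (Algebra.ofId ℤ _) (omega : QuadraticAlgebra ℤ (-c) (-b)) (by
      simp only [eval₂_add, eval₂_mul, eval₂_pow, eval₂_X, eval₂_C]
      ext <;> simp [pow_two]))
    (QuadraticAlgebra.lift ⟨AdjoinRoot.root _, by
      have h := AdjoinRoot.eval₂_root (X ^ 2 + C b * X + C c : ℤ[X])
      simp only [eval₂_add, eval₂_mul, eval₂_pow, eval₂_X, eval₂_C] at h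
      simp only [eq_intCast] at h
      simp only [zsmul_eq_mul]
      push_cast
      linear_combination h⟩)
    (by
      apply QuadraticAlgebra.algHom_ext
      simp [QuadraticAlgebra.lift])
    (by
      apply AdjoinRoot.algHom_ext
      simp [QuadraticAlgebra.lift])

open QuadraticAlgebra in
theorem qa_disc {a b a' b' : ℤ} (e : QuadraticAlgebra ℤ a b ≃+* QuadraticAlgebra ℤ a' b') :
    b ^ 2 + 4 * a = b' ^ 2 + 4 * a' := by
  obtain ⟨p, q, hp⟩ : ∃ p q : ℤ, e omega = ⟨p, q⟩ := ⟨_, _, rfl⟩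
  obtain ⟨r, s, hr⟩ : ∃ p q : ℤ, e.symm omega = ⟨p, q⟩ := ⟨_, _, rfl⟩
  have key : ∀ x y : ℤ, e ⟨x, y⟩ = (x : QuadraticAlgebra ℤ a' b') + (y : QuadraticAlgebra ℤ a' b') * ⟨p, q⟩ := by
    intro x y
    have : (⟨x, y⟩ : QuadraticAlgebra ℤ a b) = (x : QuadraticAlgebra ℤ a b) + (y : QuadraticAlgebra ℤ a b) * omega := by
      ext <;> simp
    rw [this, map_add, map_mul, map_intCast, map_intCast, hp]
  have h1 := key r s
  rw [← hr, e.apply_symm_apply] at h1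
  have h1' := congrArg QuadraticAlgebra.im h1
  have h2 := key a b
  rw [← omega_mul_omega_eq_mk, map_mul, hp] at h2
  have h3 := congrArg QuadraticAlgebra.im h2
  have h4 := congrArg QuadraticAlgebra.re h2
  simp at h1' h3 h4
  have hq : q * q = 1 := by
    rcases Int.isUnit_iff.1 (IsUnit.of_mul_eq_one s (by linarith : q * s = 1)) with h | h <;>
      simp [h]
  have hb : b = 2 * p + b' * q := by
    linear_combination (b - 2 * p - b' * q) * (- hq) - q * h3
  have : b' ^ 2 = (b - 2 * p) ^ 2 := by rw [hb]; linear_combination (-b' ^ 2) * hq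
  linear_combination (-4) * h4 - this + 4 * a' * hq

open QuadraticAlgebra in
theorem qa_iso {a b a' b' : ℤ} (h : b ^ 2 + 4 * a = b' ^ 2 + 4 * a') :
    Nonempty (QuadraticAlgebra ℤ a b ≃+* QuadraticAlgebra ℤ a' b') := by
  obtain ⟨k, hk⟩ : ∃ k, b = b' + 2 * k := by
    have h2 : (2 : ℤ) ∣ (b - b') := by
      have : Even (b ^ 2 - b' ^ 2) := ⟨2 * (a' - a), by linarith⟩
      have := (Int.even_sub.1 this)
      simp only [Int.even_pow, ne_eq, OfNat.ofNat_ne_zero, not_false_eq_true, and_true] at this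
      exact (Int.even_sub.2 this).two_dvd
    obtain ⟨k, hk⟩ := h2
    exact ⟨k, by linarith⟩
  have ha : a' = a + k * b' + k * k := by subst hk; linarith
  subst hk ha
  refine ⟨(AlgEquiv.ofAlgHom (R := ℤ) (QuadraticAlgebra.lift ⟨⟨k, 1⟩, ?_⟩)
    (QuadraticAlgebra.lift ⟨⟨-k, 1⟩, ?_⟩) ?_ ?_).toRingEquiv⟩
  · ext <;> simp <;> ring
  · ext <;> simp <;> ring
  · apply QuadraticAlgebra.algHom_ext
    ext <;> simp [QuadraticAlgebra.lift]
  · apply QuadraticAlgebra.algHom_ext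
    ext <;> simp [QuadraticAlgebra.lift]

/-- For monic quadratics `f = X² + bX + c` and `g = X² + b'X + c'` over
`ℤ`, the rings `ℤ[X]⧸(f)` and `ℤ[X]⧸(g)` are isomorphic iff `b² − 4c = b'² − 4c'`,
i.e. iff `f` and `g` have the same discriminant. -/
theorem monic_quadratic_quotients_iso_iff_discriminant_eq
    (b c b' c' : ℤ) :
    Nonempty
      ((ℤ[X] ⧸ Ideal.span {(X ^ 2 + C b * X + C c : ℤ[X])}) ≃+*
        (ℤ[X] ⧸ Ideal.span {(X ^ 2 + C b' * X + C c' : ℤ[X])})) ↔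
      b ^ 2 - 4 * c = b' ^ 2 - 4 * c' := by
  have e1 : (ℤ[X] ⧸ Ideal.span {(X ^ 2 + C b * X + C c : ℤ[X])}) ≃+* _ :=
    (quotEquivQA b c).toRingEquiv
  have e2 : (ℤ[X] ⧸ Ideal.span {(X ^ 2 + C b' * X + C c' : ℤ[X])}) ≃+* _ :=
    (quotEquivQA b' c').toRingEquiv
  constructor
  · rintro ⟨e⟩
    have := qa_disc ((e1.symm.trans e).trans e2)
    linarith
  · intro h
    obtain ⟨e⟩ := qa_iso (a := -c) (b := -b) (a' := -c') (b' := -b') (by linarith)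
    exact ⟨(e1.trans e).trans e2.symm⟩
end

section
/- Let A and B be quadratic algebras over ℤ. Let x ∈ A and y ∈ B be integral lifts of generators, with x² = σ·x + τ·1 in A and y² = σ'·y + τ'·1 in B, where σ, τ, σ', τ' ∈ ℤ. Then A and B are isomorphic as rings if and only if σ² + 4τ = σ'² + 4τ'. (The discriminant determines the isomorphism type of a quadratic algebra over ℤ.) -/
lemma qa_span {A : Type*} [CommRing A] (x : A)
    (hx : AddSubgroup.zmultiples
      (QuotientAddGroup.mk x : A ⧸ AddSubgroup.zmultiples (1 : A)) = ⊤) (a : A) :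
    ∃ m n : ℤ, a = m + n * x := by
  have h : (QuotientAddGroup.mk a : A ⧸ AddSubgroup.zmultiples (1 : A)) ∈
      AddSubgroup.zmultiples (QuotientAddGroup.mk x : A ⧸ AddSubgroup.zmultiples (1 : A)) := by
    rw [hx]; trivial
  obtain ⟨n, hn⟩ := AddSubgroup.mem_zmultiples_iff.1 h
  rw [← QuotientAddGroup.mk_zsmul, QuotientAddGroup.eq] at hn
  obtain ⟨m, hm⟩ := AddSubgroup.mem_zmultiples_iff.1 hn
  refine ⟨m, n, ?_⟩
  simp only [zsmul_eq_mul, mul_one] at hm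
  rw [hm]; ring

lemma qa_indep {A : Type*} [CommRing A]
    (hinjA : Function.Injective (Int.cast : ℤ → A))
    (hcycA : Nonempty ((A ⧸ AddSubgroup.zmultiples (1 : A)) ≃+ ℤ)) (x : A)
    (hx : AddSubgroup.zmultiples
      (QuotientAddGroup.mk x : A ⧸ AddSubgroup.zmultiples (1 : A)) = ⊤)
    (m n m' n' : ℤ) (h : (m : A) + n * x = m' + n' * x) : m = m' ∧ n = n' := by
  obtain ⟨e⟩ := hcycA
  have h1 : (n - n') • (QuotientAddGroup.mk x : A ⧸ AddSubgroup.zmultiples (1 : A)) = 0 := by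
    rw [← QuotientAddGroup.mk_zsmul, QuotientAddGroup.eq_zero_iff, AddSubgroup.mem_zmultiples_iff]
    refine ⟨m' - m, ?_⟩
    simp only [zsmul_eq_mul, mul_one]
    push_cast
    linear_combination -h
  have h2 : (n - n') * e (QuotientAddGroup.mk x) = 0 := by
    have := congrArg e h1
    simpa using this
  have h3 : e (QuotientAddGroup.mk x) ≠ 0 := by
    intro h0
    have h4 : e.symm 1 ∈ AddSubgroup.zmultiples
        (QuotientAddGroup.mk x : A ⧸ AddSubgroup.zmultiples (1 : A)) := by
      rw [hx]; trivial
    obtain ⟨k, hk⟩ := AddSubgroup.mem_zmultiples_iff.1 h4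
    have := congrArg e hk
    rw [map_zsmul, h0] at this
    simp at this
  have h5 : n = n' := by
    rcases mul_eq_zero.1 h2 with h | h
    · omega
    · exact absurd h h3
  subst h5
  exact ⟨hinjA (add_right_cancel h), rfl⟩

lemma qa_iso_s6 {A B : Type*} [CommRing A] [CommRing B] (x : A) (y : B)
    (sA : ∀ a : A, ∃ m n : ℤ, a = m + n * x)
    (sB : ∀ a : B, ∃ m n : ℤ, a = m + n * y)
    (iA : ∀ m n m' n' : ℤ, (m : A) + n * x = m' + n' * x → m = m' ∧ n = n')
    (iB : ∀ m n m' n' : ℤ, (m : B) + n * y = m' + n' * y → m = m' ∧ n = n')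
    (s t : ℤ) (hx : x ^ 2 = s * x + t) (hy : y ^ 2 = s * y + t) : Nonempty (A ≃+* B) := by
  choose p q h using sA
  have key : ∀ (a : A) (m n : ℤ), a = m + n * x → (p a : B) + q a * y = m + n * y := by
    intro a m n e
    obtain ⟨h1, h2⟩ := iA _ _ _ _ ((h a).symm.trans e)
    rw [h1, h2]
  let f : A →+* B :=
    { toFun := fun a => p a + q a * y
      map_one' := by simpa using key 1 1 0 (by simp)
      map_zero' := by simpa using key 0 0 0 (by simp)
      map_add' := fun a b => by
        rw [key (a + b) (p a + p b) (q a + q b)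
          (by push_cast; linear_combination h a + h b)]
        push_cast; ring
      map_mul' := fun a b => by
        rw [key (a * b) (p a * p b + q a * q b * t) (p a * q b + q a * p b + q a * q b * s)
          (by push_cast; linear_combination b * h a + (p a + q a * x) * h b + q a * q b * hx)]
        push_cast; linear_combination - q a * q b * hy }
  refine ⟨RingEquiv.ofBijective f ⟨?_, ?_⟩⟩
  · intro a b hab
    obtain ⟨h1, h2⟩ := iB _ _ _ _ hab
    rw [h a, h b, h1, h2]
  · intro b
    obtain ⟨m, n, rfl⟩ := sB b
    exact ⟨m + n * x, key _ m n rfl⟩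

/-- The discriminant determines the isomorphism type of a quadratic
algebra over `ℤ`: if `A`, `B` are quadratic algebras over `ℤ`, `x ∈ A`, `y ∈ B`
are integral lifts of generators with `x² = σ·x + τ·1` and `y² = σ'·y + τ'·1`,
then `A ≅ B` as rings iff `σ² + 4τ = σ'² + 4τ'`. -/
theorem quadratic_algebras_iso_iff_discriminant_eq
    {A B : Type*} [CommRing A] [CommRing B]
    (hinjA : Function.Injective (Int.cast : ℤ → A))
    (hcycA : Nonempty ((A ⧸ AddSubgroup.zmultiples (1 : A)) ≃+ ℤ))
    (hinjB : Function.Injective (Int.cast : ℤ → B))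
    (hcycB : Nonempty ((B ⧸ AddSubgroup.zmultiples (1 : B)) ≃+ ℤ))
    (x : A) (y : B)
    (hx : AddSubgroup.zmultiples
      (QuotientAddGroup.mk x : A ⧸ AddSubgroup.zmultiples (1 : A)) = ⊤)
    (hy : AddSubgroup.zmultiples
      (QuotientAddGroup.mk y : B ⧸ AddSubgroup.zmultiples (1 : B)) = ⊤)
    (σ τ σ' τ' : ℤ)
    (hxx : x ^ 2 = σ • x + τ • (1 : A))
    (hyy : y ^ 2 = σ' • y + τ' • (1 : B)) :
    Nonempty (A ≃+* B) ↔ σ ^ 2 + 4 * τ = σ' ^ 2 + 4 * τ' := by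
  have sA := qa_span x hx
  have sB := qa_span y hy
  have iA := qa_indep hinjA hcycA x hx
  have iB := qa_indep hinjB hcycB y hy
  simp only [zsmul_eq_mul, mul_one] at hxx hyy
  constructor
  · rintro ⟨f⟩
    obtain ⟨m, n, hf⟩ := sB (f x)
    obtain ⟨p, q, hg⟩ := sA (f.symm y)
    have e1 : y = p + q * (m + n * y) := by
      rw [← hf]
      have := congrArg f hg
      simpa using this
    have h1 := (iB 0 1 (p + q * m) (q * n) (by push_cast; linear_combination e1)).2
    have hn : n ^ 2 = 1 := by
      have : IsUnit n := IsUnit.of_mul_eq_one q (by rw [mul_comm]; exact h1.symm)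
      rcases Int.isUnit_iff.1 this with h | h <;> simp [h]
    have e2 : (f x) ^ 2 = σ * f x + τ := by
      have := congrArg f hxx
      simpa using this
    rw [hf] at e2
    obtain ⟨h2, h3⟩ := iB (m ^ 2 + n ^ 2 * τ') (2 * m * n + n ^ 2 * σ') (σ * m + τ) (σ * n)
      (by push_cast; linear_combination e2 - n ^ 2 * hyy)
    rw [hn] at h2 h3
    have h4 : σ = 2 * m + n * σ' := by linear_combination (-n) * h3 + (2 * m - σ) * hn
    have h5 : τ = m ^ 2 + τ' - σ * m := by linear_combination -h2
    rw [h5, h4]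
    linear_combination σ' ^ 2 * hn
  · intro hd
    have hpar : ∃ k, σ = σ' + 2 * k := by
      have h2 : Even (σ ^ 2 - σ' ^ 2) := ⟨2 * (τ' - τ), by linear_combination hd⟩
      have h3 : Even (σ - σ') := by
        simpa [Int.even_sub, Int.even_pow] using h2
      obtain ⟨k, hk⟩ := h3
      exact ⟨k, by omega⟩
    obtain ⟨k, hk⟩ := hpar
    have ht : τ = τ' + k ^ 2 - σ * k := by
      have : 4 * τ = 4 * (τ' + k ^ 2 - σ * k) := by
        rw [hk] at hd ⊢; linear_combination hd
      omega
    refine qa_iso_s6 x (y + k) sA ?_ iA ?_ σ τ hxx ?_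
    · intro b
      obtain ⟨m, n, rfl⟩ := sB b
      exact ⟨m - n * k, n, by push_cast; ring⟩
    · intro m n m' n' h
      obtain ⟨h1, h2⟩ := iB (m + n * k) n (m' + n' * k) n' (by push_cast; linear_combination h)
      subst h2
      exact ⟨add_right_cancel h1, rfl⟩
    · rw [ht, hk]; push_cast; linear_combination hyy
end

section
/- Let R be a commutative ℚ-algebra and let a ∈ R satisfy a·a ≠ 0 and a³ = σ•(a·a) + τ•a for some σ, τ ∈ ℚ. Suppose φ : R → R is a ℚ-algebra homomorphism with φ(a) = −a. Then σ = 0. -/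
/-- Let `R` be a commutative `ℚ`-algebra and `a ∈ R` with `a·a ≠ 0` and
`a³ = σ•(a·a) + τ•a` for some `σ, τ ∈ ℚ`. If a `ℚ`-algebra homomorphism `φ : R → R`
satisfies `φ(a) = −a`, then `σ = 0`. -/
theorem sigma_eq_zero_of_hom_neg
    {R : Type*} [CommRing R] [Algebra ℚ R] (a : R) (σ τ : ℚ)
    (ha : a * a ≠ 0) (heq : a ^ 3 = σ • (a * a) + τ • a)
    (φ : R →ₐ[ℚ] R) (hφ : φ a = -a) :
    σ = 0 := by
  have h := congrArg φ heq
  rw [map_pow, map_add, map_smul, map_smul, map_mul, hφ, neg_mul_neg, smul_neg,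
    Odd.neg_pow (by decide), heq] at h
  have h2 : ((2 : ℚ) * σ) • (a * a) = 0 := by
    rw [mul_smul, two_smul]
    linear_combination -h
  by_contra hσ
  have h3 : (2 : ℚ) * σ ≠ 0 := mul_ne_zero two_ne_zero hσ
  apply ha
  rw [← inv_smul_smul₀ h3 (a * a), h2, smul_zero]
end
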